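/- There is a constant C ≥ 0 such that for every precision p ≥ 6, every symmetric round-to-nearest function RN, all o_x, o_y ∈ [1, 1/(8u) − 2] with u = 2^(−p), and all x_h, x_l, y_h, y_l ∈ F_p with |x_l| ≤ o_x·u·|x_h|, |y_l| ≤ o_y·u·|y_h|, x_h·y_h < 0 and 2·min(|x_h|, |y_h|) ≥ max(|x_h|, |y_h|) (the hypothesis of Sterbenz's lemma), the output of accurate double-word addition with rounding RN satisfies |z_h + z_l − S| ≤ (4u² + C·u³)·|S|, where S = x_h + x_l + y_h + y_l. -/

import Mathlib

/-- The radix-2, precision-`p` floating-point numbers with unlimited exponent range. -/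
def Fp (p : ℕ) : Set ℝ := {x : ℝ | ∃ M e : ℤ, |M| ≤ 2 ^ p - 1 ∧ x = (M : ℝ) * (2 : ℝ) ^ e}

/-- Round toward `-∞`: the largest floating-point number `≤ x`. -/
noncomputable def RD (p : ℕ) (x : ℝ) : ℝ := sSup {f : ℝ | f ∈ Fp p ∧ f ≤ x}

/-- Round toward `+∞`: the smallest floating-point number `≥ x`. -/
noncomputable def RU (p : ℕ) (x : ℝ) : ℝ := sInf {f : ℝ | f ∈ Fp p ∧ x ≤ f}

/-- `y` is a faithful rounding of `x`. -/
def Faithful (p : ℕ) (x y : ℝ) : Prop := y = RD p x ∨ y = RU p x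

/-- `RN` is a round-to-nearest function for precision `p`. -/
def IsRN (p : ℕ) (RN : ℝ → ℝ) : Prop :=
  (∀ x : ℝ, RN x ∈ Fp p) ∧ ∀ x f : ℝ, f ∈ Fp p → |RN x - x| ≤ |f - x|

/-- `RN` is symmetric. -/
def SymRN (RN : ℝ → ℝ) : Prop := ∀ x : ℝ, RN (-x) = -RN x

/-- `2Sum(a,b)` with rounding function `R`. -/
noncomputable def twoSum (R : ℝ → ℝ) (a b : ℝ) : ℝ × ℝ :=
  let s := R (a + b)
  let a' := R (s - b)
  let b' := R (s - a')
  (s, R (R (a - a') + R (b - b')))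

/-- `Fast2Sum(a,b)` with rounding function `R`. -/
noncomputable def fast2Sum (R : ℝ → ℝ) (a b : ℝ) : ℝ × ℝ :=
  let s := R (a + b)
  let d := R (s - a)
  (s, R (b - d))

/-- Accurate double-word addition with rounding function `R`. -/
noncomputable def accurateAdd (R : ℝ → ℝ) (xh xl yh yl : ℝ) : ℝ × ℝ :=
  let s := twoSum R xh yh
  let t := twoSum R xl yl
  let c := R (s.2 + t.1)
  let v := fast2Sum R s.1 c
  let w := R (t.2 + v.2)
  fast2Sum R v.1 w

/-!
Write `u = 2^(-p)`. The Sterbenz hypothesis makes `s_h = x_h + y_h` a floating-point number, so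
`s_l = 0` and `c = t_h`. The low words are small enough that `|t_h| ≤ min |x_h| |y_h|`, so there is
a grid `2^e ℤ` containing `s_h` and `t_h` on which `t_h` has a `p`-bit significand. This alone makes
`Fast2Sum(s_h, t_h)` exact, even though `|s_h| < |t_h|` may hold. As `2Sum(x_l, y_l)` is exact as
well, only the rounding `w = RN(t_l + v_l)` can lose information.

* If `|s_h + t_h| ≤ 2^(p+e)`, then `s_h + t_h` is a floating-point number, so `v_l = 0`, `w = t_l`,
  and nothing is lost.
* Otherwise `|t_h| ≤ |s_h + t_h|`, so `t_l` and `v_l` are both at most `u |s_h + t_h|`, and the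
  rounding error of `w` is at most `2u² |s_h + t_h|`, where `(1 - u) |s_h + t_h| ≤ |S|`.

The last `Fast2Sum` is exact because `v_h = 0` or `|w| ≤ |v_h|`.
-/

/-- The unit roundoff `u = 2^(-p)` of precision `p`, the maximal relative error of rounding to
nearest. -/
noncomputable def unitRoundoff (p : ℕ) : ℝ := (2 : ℝ) ^ (-(p : ℤ))

/-- The grid `2^e ℤ`. A sum of floating-point numbers is shown to be a floating-point number by
placing it on a grid that is coarse compared with its magnitude. -/
noncomputable def grid (e : ℤ) : AddSubgroup ℝ := AddSubgroup.zmultiples ((2 : ℝ) ^ e)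

/-- The error of rounding `x`, as exact value minus rounded value: this is the sign of the second
component that `2Sum` and `Fast2Sum` are meant to return. -/
def roundErr (R : ℝ → ℝ) (x : ℝ) : ℝ := x - R x

section

variable {p : ℕ} {R : ℝ → ℝ} {a b s t r x f : ℝ} {e g : ℤ}

/-! ### Grids and floating-point numbers -/

lemma unitRoundoff_pos : 0 < unitRoundoff p := by
  unfold unitRoundoff
  positivity

lemma unitRoundoff_mul_two_pow : unitRoundoff p * 2 ^ p = 1 := by
  rw [unitRoundoff, zpow_neg, zpow_natCast]
  exact inv_mul_cancel₀ (by positivity)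

lemma unitRoundoff_le_two_pow_neg {n : ℕ} (h : n ≤ p) : unitRoundoff p ≤ (2 : ℝ) ^ (-(n : ℤ)) :=
  zpow_le_zpow_right₀ one_le_two (by omega)

lemma unitRoundoff_le_half (hp : p ≠ 0) : unitRoundoff p ≤ 1 / 2 :=
  (unitRoundoff_le_two_pow_neg (Nat.one_le_iff_ne_zero.2 hp)).trans_eq (by norm_num)

lemma mem_grid : x ∈ grid e ↔ ∃ k : ℤ, (k : ℝ) * (2 : ℝ) ^ e = x := by
  simp only [grid, AddSubgroup.mem_zmultiples_iff, zsmul_eq_mul]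

lemma grid_antitone : Antitone grid := by
  intro e g heg
  obtain ⟨n, rfl⟩ := Int.le.dest heg
  refine AddSubgroup.zmultiples_le_of_mem (mem_grid.2 ⟨2 ^ n, ?_⟩)
  rw [zpow_add₀ two_ne_zero, zpow_natCast]
  push_cast
  ring

lemma two_zpow_le_abs_of_mem_grid (hx : x ∈ grid e) (h0 : x ≠ 0) : (2 : ℝ) ^ e ≤ |x| := by
  obtain ⟨k, rfl⟩ := mem_grid.1 hx
  have hk : (1 : ℝ) ≤ |(k : ℝ)| := by
    exact_mod_cast Int.one_le_abs (Int.cast_ne_zero.1 (left_ne_zero_of_mul h0))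
  rw [abs_mul, abs_zpow, abs_two]
  exact le_mul_of_one_le_left (by positivity) hk

lemma le_two_pow_mul_of_le_sub_one_mul (h : x ≤ (2 ^ p - 1) * (2 : ℝ) ^ e) :
    x ≤ 2 ^ p * (2 : ℝ) ^ e := by
  refine h.trans ?_
  gcongr
  exact sub_le_self _ zero_le_one

lemma zero_mem_Fp (p : ℕ) : (0 : ℝ) ∈ Fp p :=
  ⟨0, 0, by rw [abs_zero, sub_nonneg]; exact one_le_pow₀ one_le_two, by simp⟩

lemma neg_mem_Fp (hx : x ∈ Fp p) : -x ∈ Fp p := by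
  obtain ⟨M, e, hM, rfl⟩ := hx
  exact ⟨-M, e, by rwa [abs_neg], by push_cast; ring⟩

lemma abs_mem_Fp (hx : x ∈ Fp p) : |x| ∈ Fp p := by
  rcases abs_choice x with h | h <;> rw [h]
  exacts [hx, neg_mem_Fp hx]

lemma two_zpow_mem_Fp (hp : p ≠ 0) (e : ℤ) : (2 : ℝ) ^ e ∈ Fp p := by
  have : (2 : ℤ) ^ 1 ≤ 2 ^ p := pow_le_pow_right₀ one_le_two (Nat.one_le_iff_ne_zero.2 hp)
  exact ⟨1, e, by rw [abs_one]; omega, by simp⟩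

lemma two_pow_mul_two_zpow_mem_Fp (hp : p ≠ 0) (e : ℤ) : (2 : ℝ) ^ p * (2 : ℝ) ^ e ∈ Fp p := by
  rw [← zpow_natCast, ← zpow_add₀ two_ne_zero]
  exact two_zpow_mem_Fp hp _

lemma mem_Fp_of_mem_grid (hp : p ≠ 0) (hx : x ∈ grid e) (h : |x| ≤ 2 ^ p * (2 : ℝ) ^ e) :
    x ∈ Fp p := by
  obtain ⟨k, rfl⟩ := mem_grid.1 hx
  rw [abs_mul, abs_zpow, abs_two] at h
  have hk : |k| ≤ 2 ^ p := by exact_mod_cast le_of_mul_le_mul_right h (zpow_pos two_pos e)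
  rcases hk.lt_or_eq with hlt | heq
  · exact ⟨k, e, Int.le_sub_one_of_lt hlt, rfl⟩
  -- The significand `±2^p` does not fit and is renormalized to `±1`.
  · have hpow := two_pow_mul_two_zpow_mem_Fp hp e
    rcases eq_or_eq_neg_of_abs_eq heq with rfl | rfl
    · exact_mod_cast hpow
    · simpa using neg_mem_Fp hpow

lemma exists_binade (p : ℕ) (hx : x ≠ 0) :
    ∃ g : ℤ, 2 ^ p * (2 : ℝ) ^ g ≤ |x| ∧ |x| < 2 ^ p * (2 : ℝ) ^ (g + 1) := by
  obtain ⟨n, hlow, hupp⟩ := exists_mem_Ico_zpow (abs_pos.2 hx) (one_lt_two (α := ℝ))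
  refine ⟨n - p, ?_, ?_⟩ <;> rw [← zpow_natCast, ← zpow_add₀ two_ne_zero]
  · rwa [add_sub_cancel]
  · rwa [← add_assoc, add_sub_cancel]

lemma exists_mem_grid_of_mem_Fp (hx : x ∈ Fp p) :
    ∃ e : ℤ, x ∈ grid e ∧ |x| ≤ (2 ^ p - 1) * (2 : ℝ) ^ e := by
  obtain ⟨M, e, hM, rfl⟩ := hx
  refine ⟨e, mem_grid.2 ⟨M, rfl⟩, ?_⟩
  rw [abs_mul, abs_zpow, abs_two]
  gcongr
  exact_mod_cast hM

lemma mem_grid_succ_of_le_abs (hx : x ∈ Fp p) (h : 2 ^ p * (2 : ℝ) ^ e ≤ |x|) :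
    x ∈ grid (e + 1) := by
  obtain ⟨f, hf, hxf⟩ := exists_mem_grid_of_mem_Fp hx
  refine grid_antitone (Int.add_one_le_iff.2 ?_) hf
  rw [← zpow_lt_zpow_iff_right₀ (one_lt_two (α := ℝ))]
  refine lt_of_mul_lt_mul_left (h.trans_lt (hxf.trans_lt ?_)) (by positivity)
  gcongr
  exact sub_one_lt _

lemma left_mem_grid_of_le_abs_add (ha : a ∈ Fp p) (hae : a ∈ grid e)
    (hb : |b| ≤ (2 ^ p - 1) * (2 : ℝ) ^ e) (heg : e ≤ g) (h : 2 ^ p * (2 : ℝ) ^ g ≤ |a + b|) :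
    a ∈ grid g := by
  rcases heg.eq_or_lt with rfl | hlt
  · exact hae
  have hsucc : (2 : ℝ) ^ g = (2 : ℝ) ^ (g - 1) * 2 := by
    rw [← zpow_add_one₀ two_ne_zero, sub_add_cancel]
  have hpred : (2 : ℝ) ^ p * (2 : ℝ) ^ (g - 1) ≤ |a| := by
    have hbg : |b| ≤ 2 ^ p * (2 : ℝ) ^ (g - 1) := by
      refine (le_two_pow_mul_of_le_sub_one_mul hb).trans ?_
      gcongr
      · exact one_le_two
      · omega
    rw [hsucc] at h
    linarith [abs_add_le a b]
  simpa only [sub_add_cancel] using mem_grid_succ_of_le_abs ha hpred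

lemma exists_common_grid (ha : a ∈ Fp p) (hb : b ∈ Fp p) :
    ∃ e : ℤ, a ∈ grid e ∧ b ∈ grid e ∧ min |a| |b| ≤ (2 ^ p - 1) * (2 : ℝ) ^ e := by
  obtain ⟨e, hae, hle⟩ := exists_mem_grid_of_mem_Fp ha
  obtain ⟨f, hbf, hlf⟩ := exists_mem_grid_of_mem_Fp hb
  rcases le_total e f with h | h
  · exact ⟨e, hae, grid_antitone h hbf, (min_le_left _ _).trans hle⟩
  · exact ⟨f, grid_antitone h hae, hbf, (min_le_right _ _).trans hlf⟩

lemma exists_common_grid_of_abs_le (ha : a ∈ Fp p) (hb : b ∈ Fp p) (h : |b| ≤ |a|) :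
    ∃ e : ℤ, a ∈ grid e ∧ b ∈ grid e ∧ |b| ≤ (2 ^ p - 1) * (2 : ℝ) ^ e := by
  simpa only [min_eq_right h] using exists_common_grid ha hb

lemma exists_common_grid_add (ha : a ∈ Fp p) (hb : b ∈ Fp p) (ht : t ∈ Fp p)
    (h : |t| ≤ min |a| |b|) :
    ∃ e : ℤ, a + b ∈ grid e ∧ t ∈ grid e ∧ |t| ≤ (2 ^ p - 1) * (2 : ℝ) ^ e := by
  obtain ⟨e, hae, hbe, hle⟩ := exists_common_grid ha hb
  obtain ⟨f, htf, hlf⟩ := exists_mem_grid_of_mem_Fp ht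
  rcases le_total e f with hef | hfe
  · exact ⟨e, add_mem hae hbe, grid_antitone hef htf, h.trans hle⟩
  · exact ⟨f, grid_antitone hfe (add_mem hae hbe), htf, hlf⟩

lemma add_mem_Fp_or_abs_le_abs_add (hp : p ≠ 0) (hs : s ∈ grid e) (ht : t ∈ grid e)
    (hle : |t| ≤ (2 ^ p - 1) * (2 : ℝ) ^ e) : s + t ∈ Fp p ∨ |t| ≤ |s + t| :=
  (le_total |s + t| (2 ^ p * (2 : ℝ) ^ e)).imp (mem_Fp_of_mem_grid hp (add_mem hs ht))
    (le_two_pow_mul_of_le_sub_one_mul hle).trans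

lemma unitRoundoff_mul_abs_le_abs_add (hs : s ∈ grid e) (ht : t ∈ grid e)
    (hle : |t| ≤ (2 ^ p - 1) * (2 : ℝ) ^ e) (h0 : s + t ≠ 0) :
    unitRoundoff p * |t| ≤ |s + t| :=
  calc unitRoundoff p * |t| ≤ unitRoundoff p * (2 ^ p * (2 : ℝ) ^ e) :=
        mul_le_mul_of_nonneg_left (le_two_pow_mul_of_le_sub_one_mul hle) unitRoundoff_pos.le
    _ = (2 : ℝ) ^ e := by rw [← mul_assoc, unitRoundoff_mul_two_pow, one_mul]
    _ ≤ |s + t| := two_zpow_le_abs_of_mem_grid (add_mem hs ht) h0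

/-- Sterbenz's lemma: for `a` and `b` of opposite signs, `|a + b| ≤ min |a| |b|` says that their
magnitudes are within a factor of two of each other. -/
lemma add_mem_Fp_of_abs_add_le_min (hp : p ≠ 0) (ha : a ∈ Fp p) (hb : b ∈ Fp p)
    (h : |a + b| ≤ min |a| |b|) : a + b ∈ Fp p := by
  obtain ⟨e, hae, hbe, hle⟩ := exists_common_grid ha hb
  exact mem_Fp_of_mem_grid hp (add_mem hae hbe)
    (le_two_pow_mul_of_le_sub_one_mul (h.trans hle))

/-! ### Rounding to nearest -/

lemma round_add_roundErr (R : ℝ → ℝ) (x : ℝ) : R x + roundErr R x = x :=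
  add_sub_cancel _ _

namespace IsRN

lemma eq_self (hR : IsRN p R) (hx : x ∈ Fp p) : R x = x := by
  have := hR.2 x x hx
  rwa [sub_self, abs_zero, abs_nonpos_iff, sub_eq_zero] at this

lemma roundErr_eq_zero (hR : IsRN p R) (hx : x ∈ Fp p) : roundErr R x = 0 := by
  rw [roundErr, hR.eq_self hx, sub_self]

lemma abs_roundErr_le (hR : IsRN p R) (hf : f ∈ Fp p) (x : ℝ) : |roundErr R x| ≤ |f - x| := by
  rw [roundErr, abs_sub_comm]
  exact hR.2 x f hf

lemma round_le (hR : IsRN p R) (hf : f ∈ Fp p) (h : x ≤ f) : R x ≤ f := by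
  have hnear := hR.2 x f hf
  rw [abs_of_nonneg (sub_nonneg.2 h)] at hnear
  linarith [le_abs_self (R x - x)]

lemma le_round (hR : IsRN p R) (hf : f ∈ Fp p) (h : f ≤ x) : f ≤ R x := by
  have hnear := hR.2 x f hf
  rw [abs_of_nonpos (sub_nonpos.2 h)] at hnear
  linarith [neg_abs_le (R x - x)]

lemma abs_round_le (hR : IsRN p R) (hf : f ∈ Fp p) (h : |x| ≤ |f|) : |R x| ≤ |f| := by
  have hF := abs_mem_Fp hf
  obtain ⟨hlow, hupp⟩ := abs_le.1 h
  exact abs_le.2 ⟨hR.le_round (neg_mem_Fp hF) hlow, hR.round_le hF hupp⟩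

lemma le_abs_round (hR : IsRN p R) (hf : f ∈ Fp p) (h : |f| ≤ |x|) : |f| ≤ |R x| := by
  have hF := abs_mem_Fp hf
  rcases le_abs.1 h with hx | hx
  · exact (hR.le_round hF hx).trans (le_abs_self _)
  · exact (le_neg_of_le_neg (hR.round_le (neg_mem_Fp hF) (le_neg_of_le_neg hx))).trans
      (neg_le_abs _)

lemma abs_roundErr_le_half (hR : IsRN p R) (hp : p ≠ 0) (h : |x| ≤ 2 ^ p * (2 : ℝ) ^ e) :
    |roundErr R x| ≤ (2 : ℝ) ^ e / 2 := by
  have he : (0 : ℝ) < (2 : ℝ) ^ e := by positivity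
  obtain ⟨y, rfl⟩ : ∃ y : ℝ, y * (2 : ℝ) ^ e = x := ⟨x / 2 ^ e, div_mul_cancel₀ x he.ne'⟩
  rw [abs_mul, abs_of_pos he] at h
  obtain ⟨hlow, hupp⟩ := abs_le.1 (le_of_mul_le_mul_right h he)
  have hk : |round y| ≤ 2 ^ p := by
    rw [abs_le, round_eq]
    refine ⟨Int.le_floor.2 ?_, Int.lt_add_one_iff.1 (Int.floor_lt.2 ?_)⟩ <;> push_cast <;> linarith
  have hmem : (round y : ℝ) * (2 : ℝ) ^ e ∈ Fp p := by
    refine mem_Fp_of_mem_grid hp (mem_grid.2 ⟨round y, rfl⟩) ?_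
    rw [abs_mul, abs_of_pos he]
    gcongr
    exact_mod_cast hk
  calc |roundErr R (y * (2 : ℝ) ^ e)|
      ≤ |(round y : ℝ) * (2 : ℝ) ^ e - y * (2 : ℝ) ^ e| := hR.abs_roundErr_le hmem _
    _ = |y - round y| * (2 : ℝ) ^ e := by rw [← sub_mul, abs_mul, abs_of_pos he, abs_sub_comm]
    _ ≤ 1 / 2 * (2 : ℝ) ^ e := by gcongr; exact abs_sub_round y
    _ = (2 : ℝ) ^ e / 2 := by ring

lemma two_pow_mul_le_abs_round (hR : IsRN p R) (hp : p ≠ 0) (h : 2 ^ p * (2 : ℝ) ^ e ≤ |x|) :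
    2 ^ p * (2 : ℝ) ^ e ≤ |R x| := by
  have habs : |2 ^ p * (2 : ℝ) ^ e| = 2 ^ p * (2 : ℝ) ^ e := abs_of_pos (by positivity)
  rw [← habs] at h ⊢
  exact hR.le_abs_round (two_pow_mul_two_zpow_mem_Fp hp e) h

lemma abs_roundErr_le_unitRoundoff_mul_min (hR : IsRN p R) (hp : p ≠ 0) (x : ℝ) :
    |roundErr R x| ≤ unitRoundoff p * min |x| |R x| := by
  rcases eq_or_ne x 0 with rfl | hx
  · simp [roundErr, hR.eq_self (zero_mem_Fp p)]
  obtain ⟨g, hlow, hupp⟩ := exists_binade p hx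
  calc |roundErr R x| ≤ (2 : ℝ) ^ (g + 1) / 2 := hR.abs_roundErr_le_half hp hupp.le
    _ = unitRoundoff p * 2 ^ p * (2 : ℝ) ^ g := by
      rw [unitRoundoff_mul_two_pow, zpow_add_one₀ two_ne_zero]; ring
    _ = unitRoundoff p * (2 ^ p * (2 : ℝ) ^ g) := mul_assoc _ _ _
    _ ≤ unitRoundoff p * min |x| |R x| :=
      mul_le_mul_of_nonneg_left (le_min hlow (hR.two_pow_mul_le_abs_round hp hlow))
        unitRoundoff_pos.le

lemma abs_roundErr_le_unitRoundoff_mul (hR : IsRN p R) (hp : p ≠ 0) (x : ℝ) :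
    |roundErr R x| ≤ unitRoundoff p * |x| :=
  (hR.abs_roundErr_le_unitRoundoff_mul_min hp x).trans
    (mul_le_mul_of_nonneg_left (min_le_left _ _) unitRoundoff_pos.le)

lemma abs_roundErr_le_unitRoundoff_mul_round (hR : IsRN p R) (hp : p ≠ 0) (x : ℝ) :
    |roundErr R x| ≤ unitRoundoff p * |R x| :=
  (hR.abs_roundErr_le_unitRoundoff_mul_min hp x).trans
    (mul_le_mul_of_nonneg_left (min_le_right _ _) unitRoundoff_pos.le)

lemma round_mem_grid_of_le_abs (hR : IsRN p R) (hp : p ≠ 0) (h : 2 ^ p * (2 : ℝ) ^ e ≤ |x|) :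
    R x ∈ grid e :=
  grid_antitone (le_add_of_nonneg_right zero_le_one)
    (mem_grid_succ_of_le_abs (hR.1 x) (hR.two_pow_mul_le_abs_round hp h))

lemma round_mem_grid (hR : IsRN p R) (hp : p ≠ 0) (hx : x ∈ grid e) : R x ∈ grid e := by
  rcases le_total |x| (2 ^ p * (2 : ℝ) ^ e) with h | h
  · rwa [hR.eq_self (mem_Fp_of_mem_grid hp hx h)]
  · exact hR.round_mem_grid_of_le_abs hp h

lemma roundErr_add_mem_Fp (hR : IsRN p R) (hp : p ≠ 0) (ha : a ∈ Fp p) (hb : b ∈ Fp p) :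
    roundErr R (a + b) ∈ Fp p := by
  obtain ⟨e, hae, hbe, hle⟩ := exists_common_grid ha hb
  have hab := add_mem hae hbe
  refine mem_Fp_of_mem_grid hp (sub_mem hab (hR.round_mem_grid hp hab)) ?_
  -- Both `a` and `b` compete with `R (a + b)` for the nearest floating-point number.
  have hle_min : |roundErr R (a + b)| ≤ min |a| |b| := by
    refine le_min ?_ ?_
    · simpa using hR.abs_roundErr_le hb (a + b)
    · simpa using hR.abs_roundErr_le ha (a + b)
  exact le_two_pow_mul_of_le_sub_one_mul (hle_min.trans hle)

/-! ### Exactness of Fast2Sum and 2Sum -/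

/-- A condition for the exactness of `Fast2Sum` that, unlike the classical `|b| ≤ |a|`, also covers
pairs with `|a| < |b|`. -/
lemma round_add_sub_left_mem_Fp (hR : IsRN p R) (hp : p ≠ 0) (ha : a ∈ Fp p) (hb : b ∈ Fp p)
    (hae : a ∈ grid e) (hbe : b ∈ grid e) (hle : |b| ≤ (2 ^ p - 1) * (2 : ℝ) ^ e) :
    R (a + b) - a ∈ Fp p := by
  rcases le_or_gt |a + b| (2 ^ p * (2 : ℝ) ^ e) with hs | hs
  · rwa [hR.eq_self (mem_Fp_of_mem_grid hp (add_mem hae hbe) hs), add_sub_cancel_left]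
  obtain ⟨g, hlow, hupp⟩ := exists_binade p (abs_pos.1 (lt_trans (by positivity) hs))
  have heg : e ≤ g := by
    rw [← Int.lt_add_one_iff, ← zpow_lt_zpow_iff_right₀ (one_lt_two (α := ℝ))]
    exact lt_of_mul_lt_mul_left (hs.trans hupp) (by positivity)
  -- Both `R (a + b)` and `a` are multiples of `2^g`, half the unit in the last place of `a + b`.
  refine mem_Fp_of_mem_grid hp (sub_mem (hR.round_mem_grid_of_le_abs hp hlow)
    (left_mem_grid_of_le_abs_add ha hae hle heg hlow)) ?_
  have herr : |roundErr R (a + b)| ≤ (2 : ℝ) ^ g := by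
    have := hR.abs_roundErr_le_half hp hupp.le
    rwa [zpow_add_one₀ two_ne_zero, mul_div_cancel_right₀ _ two_ne_zero] at this
  calc |R (a + b) - a| = |b - roundErr R (a + b)| := by rw [roundErr]; congr 1; ring
    _ ≤ |b| + |roundErr R (a + b)| := abs_sub _ _
    _ ≤ (2 ^ p - 1) * (2 : ℝ) ^ g + (2 : ℝ) ^ g := by
      refine add_le_add (hle.trans ?_) herr
      gcongr
      · exact sub_nonneg.2 (one_le_pow₀ one_le_two)
      · exact one_le_two
    _ = 2 ^ p * (2 : ℝ) ^ g := by ring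

lemma round_add_sub_left_mem_Fp_of_abs_le (hR : IsRN p R) (hp : p ≠ 0) (ha : a ∈ Fp p)
    (hb : b ∈ Fp p) (h : |b| ≤ |a|) : R (a + b) - a ∈ Fp p := by
  obtain ⟨e, hae, hbe, hle⟩ := exists_common_grid_of_abs_le ha hb h
  exact hR.round_add_sub_left_mem_Fp hp ha hb hae hbe hle

lemma fast2Sum_eq (hR : IsRN p R) (hp : p ≠ 0) (ha : a ∈ Fp p) (hb : b ∈ Fp p)
    (h : R (a + b) - a ∈ Fp p) : fast2Sum R a b = (R (a + b), roundErr R (a + b)) := by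
  have hsub : b - (R (a + b) - a) = roundErr R (a + b) := by rw [roundErr]; ring
  simp only [fast2Sum, hR.eq_self h, hsub, hR.eq_self (hR.roundErr_add_mem_Fp hp ha hb)]

lemma fast2Sum_eq_of_eq_zero_or_abs_le (hR : IsRN p R) (hp : p ≠ 0) (ha : a ∈ Fp p)
    (hb : b ∈ Fp p) (h : a = 0 ∨ |b| ≤ |a|) :
    fast2Sum R a b = (R (a + b), roundErr R (a + b)) := by
  refine hR.fast2Sum_eq hp ha hb ?_
  rcases h with rfl | h
  · rwa [zero_add, sub_zero, hR.eq_self hb]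
  · exact hR.round_add_sub_left_mem_Fp_of_abs_le hp ha hb h

lemma twoSum_eq_of_add_mem (hR : IsRN p R) (ha : a ∈ Fp p) (hb : b ∈ Fp p) (h : a + b ∈ Fp p) :
    twoSum R a b = (a + b, 0) := by
  simp [twoSum, hR.eq_self h, hR.eq_self ha, hR.eq_self hb, hR.eq_self (zero_mem_Fp p)]

lemma twoSum_eq_of_sub_mem (hR : IsRN p R) (hp : p ≠ 0) (ha : a ∈ Fp p) (hb : b ∈ Fp p)
    (hb' : R (a + b) - R (R (a + b) - b) ∈ Fp p) (ha' : a - R (R (a + b) - b) ∈ Fp p) :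
    twoSum R a b = (R (a + b), roundErr R (a + b)) := by
  set s := R (a + b) with hs
  set a' := R (s - b) with ha_def
  -- `b - b'` is, up to sign, the error of the rounded subtraction `R (s - b)`.
  have hδb : b - (s - a') ∈ Fp p := by
    have := neg_mem_Fp (hR.roundErr_add_mem_Fp hp (hR.1 (a + b)) (neg_mem_Fp hb))
    rwa [← sub_eq_add_neg, roundErr, ← hs, ← ha_def,
      show -(s - b - a') = b - (s - a') by ring] at this
  have hsum : a - a' + (b - (s - a')) = roundErr R (a + b) := by rw [roundErr, ← hs]; ring
  simp only [twoSum, ← hs, ← ha_def, hR.eq_self hb', hR.eq_self ha', hR.eq_self hδb, hsum,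
    hR.eq_self (hR.roundErr_add_mem_Fp hp ha hb)]

lemma sub_round_mem_Fp_of_abs_le (hR : IsRN p R) (hp : 3 ≤ p) (ha : a ∈ Fp p) (h : |b| ≤ |a|) :
    a - R (R (a + b) - b) ∈ Fp p := by
  have hp0 : p ≠ 0 := by omega
  set s := R (a + b) with hs
  set a' := R (s - b) with ha'
  have herr : |roundErr R (a + b)| ≤ |a| / 4 := by
    calc |roundErr R (a + b)| ≤ unitRoundoff p * |a + b| :=
          hR.abs_roundErr_le_unitRoundoff_mul hp0 _
      _ ≤ 2 ^ (-3 : ℤ) * (|a| + |b|) := by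
          gcongr
          exacts [unitRoundoff_le_two_pow_neg hp, abs_add_le a b]
      _ ≤ |a| / 4 := by norm_num; linarith
  -- `a` competes with `a'` for the floating-point number nearest to `s - b`.
  have hnear : |roundErr R (s - b)| ≤ |roundErr R (a + b)| := by
    convert hR.abs_roundErr_le ha (s - b) using 2
    rw [roundErr, ← hs]
    ring
  have hdist : |a - a'| ≤ |a| / 2 := by
    calc |a - a'| = |roundErr R (a + b) + roundErr R (s - b)| := by
          rw [roundErr, roundErr, ← hs, ← ha']; congr 1; ring
      _ ≤ |roundErr R (a + b)| + |roundErr R (s - b)| := abs_add_le _ _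
      _ ≤ |a| / 2 := by linarith
  have ha'_large : |a| - |a'| ≤ |a - a'| := abs_sub_abs_le_abs_sub a a'
  rw [sub_eq_add_neg]
  refine add_mem_Fp_of_abs_add_le_min hp0 ha (neg_mem_Fp (hR.1 _)) (le_min ?_ ?_)
  · rw [← sub_eq_add_neg]
    linarith [abs_nonneg a]
  · rw [← sub_eq_add_neg, abs_neg]
    linarith

lemma twoSum_eq (hR : IsRN p R) (hp : 3 ≤ p) (ha : a ∈ Fp p) (hb : b ∈ Fp p) :
    twoSum R a b = (R (a + b), roundErr R (a + b)) := by
  have hp0 : p ≠ 0 := by omega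
  rcases le_total |a| |b| with hab | hba
  · -- The first steps are a Fast2Sum of `b` and `a`.
    have ha' : R (a + b) - b ∈ Fp p := by
      simpa only [add_comm] using hR.round_add_sub_left_mem_Fp_of_abs_le hp0 hb ha hab
    refine hR.twoSum_eq_of_sub_mem hp0 ha hb ?_ ?_ <;> rw [hR.eq_self ha']
    · rwa [sub_sub_cancel]
    · rw [show a - (R (a + b) - b) = roundErr R (a + b) by rw [roundErr]; ring]
      exact hR.roundErr_add_mem_Fp hp0 ha hb
  rcases le_total |b| |a + b| with hbs | hsb
  · -- Now `|b| ≤ |R (a + b)|`, so the next steps are a Fast2Sum of `R (a + b)` and `-b`.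
    refine hR.twoSum_eq_of_sub_mem hp0 ha hb ?_ (hR.sub_round_mem_Fp_of_abs_le hp ha hba)
    rw [← neg_sub, sub_eq_add_neg _ b]
    exact neg_mem_Fp (hR.round_add_sub_left_mem_Fp_of_abs_le hp0 (hR.1 _) (neg_mem_Fp hb)
      (by rw [abs_neg]; exact hR.le_abs_round hb hbs))
  · have hab := add_mem_Fp_of_abs_add_le_min hp0 ha hb (le_min (hsb.trans hba) hsb)
    rw [hR.twoSum_eq_of_add_mem ha hb hab, hR.eq_self hab, hR.roundErr_eq_zero hab]

/-! ### The error bound -/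

lemma round_add_eq_zero_or_abs_round_le (hR : IsRN p R) (hp : p ≠ 0) (ht : t ∈ Fp p)
    (hr : r ∈ Fp p) (hrt : |r| ≤ unitRoundoff p * |t|) (hse : s ∈ grid e) (hte : t ∈ grid e)
    (hle : |t| ≤ (2 ^ p - 1) * (2 : ℝ) ^ e) :
    R (s + t) = 0 ∨ |R (r + roundErr R (s + t))| ≤ |R (s + t)| := by
  rcases eq_or_ne (s + t) 0 with h0 | h0
  · exact .inl (by rw [h0, hR.eq_self (zero_mem_Fp p)])
  right
  rcases add_mem_Fp_or_abs_le_abs_add hp hse hte hle with hst | hts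
  · rw [hR.roundErr_eq_zero hst, add_zero, hR.eq_self hr, hR.eq_self hst]
    exact hrt.trans (unitRoundoff_mul_abs_le_abs_add hse hte hle h0)
  · refine hR.abs_round_le (hR.1 _) ?_
    calc |r + roundErr R (s + t)| ≤ |r| + |roundErr R (s + t)| := abs_add_le _ _
      _ ≤ unitRoundoff p * |R (s + t)| + unitRoundoff p * |R (s + t)| :=
        add_le_add
          (hrt.trans (mul_le_mul_of_nonneg_left (hR.le_abs_round ht hts) unitRoundoff_pos.le))
          (hR.abs_roundErr_le_unitRoundoff_mul_round hp _)
      _ = 2 * unitRoundoff p * |R (s + t)| := by ring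
      _ ≤ |R (s + t)| :=
        mul_le_of_le_one_left (abs_nonneg _) (by linarith [unitRoundoff_le_half hp])

lemma abs_roundErr_add_roundErr_le (hR : IsRN p R) (hp : p ≠ 0) (hr : r ∈ Fp p)
    (hrt : |r| ≤ unitRoundoff p * |t|) (h : s + t ∈ Fp p ∨ |t| ≤ |s + t|) :
    |roundErr R (r + roundErr R (s + t))| ≤
      2 * unitRoundoff p ^ 2 / (1 - unitRoundoff p) * |s + t + r| := by
  have hu := unitRoundoff_pos (p := p)
  have hu1 : 0 < 1 - unitRoundoff p := by linarith [unitRoundoff_le_half hp]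
  rcases h with hst | hts
  · rw [hR.roundErr_eq_zero hst, add_zero, hR.roundErr_eq_zero hr, abs_zero]
    positivity
  set u := unitRoundoff p
  have hru : |r| ≤ u * |s + t| := hrt.trans (by gcongr)
  have hsum : (1 - u) * |s + t| ≤ |s + t + r| := by
    have := abs_sub (s + t + r) r
    rw [add_sub_cancel_right] at this
    linarith
  calc |roundErr R (r + roundErr R (s + t))|
      ≤ u * |r + roundErr R (s + t)| := hR.abs_roundErr_le_unitRoundoff_mul hp _
    _ ≤ u * (u * |s + t| + u * |s + t|) := by
      gcongr
      exact (abs_add_le _ _).trans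
        (add_le_add hru (hR.abs_roundErr_le_unitRoundoff_mul hp _))
    _ = 2 * u ^ 2 / (1 - u) * ((1 - u) * |s + t|) := by field_simp; ring
    _ ≤ 2 * u ^ 2 / (1 - u) * |s + t + r| := by gcongr

lemma accurateAdd_fst_add_snd (hR : IsRN p R) (hp : 3 ≤ p) {xh xl yh yl : ℝ} (hxh : xh ∈ Fp p)
    (hxl : xl ∈ Fp p) (hyh : yh ∈ Fp p) (hyl : yl ∈ Fp p) (hsh : xh + yh ∈ Fp p)
    (hd : R (xh + yh + R (xl + yl)) - (xh + yh) ∈ Fp p)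
    (hw : R (xh + yh + R (xl + yl)) = 0 ∨
      |R (roundErr R (xl + yl) + roundErr R (xh + yh + R (xl + yl)))| ≤
        |R (xh + yh + R (xl + yl))|) :
    (accurateAdd R xh xl yh yl).1 + (accurateAdd R xh xl yh yl).2 =
      xh + xl + yh + yl -
        roundErr R (roundErr R (xl + yl) + roundErr R (xh + yh + R (xl + yl))) := by
  have hp0 : p ≠ 0 := by omega
  have hth : R (xl + yl) ∈ Fp p := hR.1 _
  simp only [accurateAdd, hR.twoSum_eq_of_add_mem hxh hyh hsh, hR.twoSum_eq hp hxl hyl, zero_add,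
    hR.eq_self hth, hR.fast2Sum_eq hp0 hsh hth hd,
    hR.fast2Sum_eq_of_eq_zero_or_abs_le hp0 (hR.1 _) (hR.1 _) hw, round_add_roundErr]
  simp only [roundErr]
  ring

end IsRN

lemma abs_add_le_min_of_mul_neg (h : a * b < 0) (hmax : max |a| |b| ≤ 2 * min |a| |b|) :
    |a + b| ≤ min |a| |b| := by
  have hdist : |a + b| = max |a| |b| - min |a| |b| := by
    rw [max_sub_min_eq_abs']
    rcases mul_neg_iff.1 h with ⟨ha, hb⟩ | ⟨ha, hb⟩
    · rw [abs_of_pos ha, abs_of_neg hb, sub_neg_eq_add]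
    · rw [abs_of_neg ha, abs_of_pos hb, ← neg_add', abs_neg]
  linarith

lemma abs_add_le_min_of_abs_le_third {c d : ℝ} (hc : |c| ≤ |a| / 3) (hd : |d| ≤ |b| / 3)
    (hmax : max |a| |b| ≤ 2 * min |a| |b|) : |c + d| ≤ min |a| |b| := by
  linarith [abs_add_le c d, min_add_max |a| |b|]

lemma mul_abs_le_third {u o : ℝ} (hu : 0 < u) (ho : o ≤ 1 / (8 * u) - 2) (x : ℝ) :
    o * u * |x| ≤ |x| / 3 := by
  have hou : o * u ≤ 1 / 8 - 2 * u := by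
    calc o * u ≤ (1 / (8 * u) - 2) * u := by gcongr
      _ = 1 / 8 - 2 * u := by field_simp
  calc o * u * |x| ≤ 1 / 3 * |x| := by gcongr; linarith
    _ = |x| / 3 := by ring

lemma two_mul_sq_div_one_sub_le {u : ℝ} (hu : u ≤ 1 / 2) : 2 * u ^ 2 / (1 - u) ≤ 4 * u ^ 2 := by
  have hinv : (1 - u)⁻¹ ≤ 2 := inv_le_of_inv_le₀ two_pos (by linarith)
  calc 2 * u ^ 2 / (1 - u) = 2 * u ^ 2 * (1 - u)⁻¹ := div_eq_mul_inv _ _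
    _ ≤ 2 * u ^ 2 * 2 := by gcongr
    _ = 4 * u ^ 2 := by ring

end

theorem accurate_relerr_bound_sterbenz_general {p : ℕ} (hp : 3 ≤ p) {R : ℝ → ℝ} (hR : IsRN p R)
    {xh xl yh yl : ℝ} (hxh : xh ∈ Fp p) (hxl : xl ∈ Fp p) (hyh : yh ∈ Fp p) (hyl : yl ∈ Fp p)
    (hhigh : |xh + yh| ≤ min |xh| |yh|) (hlow : |xl + yl| ≤ min |xh| |yh|) :
    |(accurateAdd R xh xl yh yl).1 + (accurateAdd R xh xl yh yl).2 - (xh + xl + yh + yl)| ≤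
      2 * unitRoundoff p ^ 2 / (1 - unitRoundoff p) * |xh + xl + yh + yl| := by
  have hp0 : p ≠ 0 := by omega
  have hsh := add_mem_Fp_of_abs_add_le_min hp0 hxh hyh hhigh
  have hth : R (xl + yl) ∈ Fp p := hR.1 _
  have htl := hR.roundErr_add_mem_Fp hp0 hxl hyl
  have htl_le := hR.abs_roundErr_le_unitRoundoff_mul_round hp0 (xl + yl)
  have hth_le : |R (xl + yl)| ≤ min |xh| |yh| :=
    le_min (hR.abs_round_le hxh (hlow.trans (min_le_left _ _)))
      (hR.abs_round_le hyh (hlow.trans (min_le_right _ _)))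
  obtain ⟨e, hse, hte, hle⟩ := exists_common_grid_add hxh hyh hth hth_le
  have hsum := hR.accurateAdd_fst_add_snd hp hxh hxl hyh hyl hsh
    (hR.round_add_sub_left_mem_Fp hp0 hsh hth hse hte hle)
    (hR.round_add_eq_zero_or_abs_round_le hp0 hth htl htl_le hse hte hle)
  have hS : xh + xl + yh + yl = xh + yh + R (xl + yl) + roundErr R (xl + yl) := by
    rw [roundErr]; ring
  rw [hsum, sub_sub_cancel_left, abs_neg, hS]
  exact hR.abs_roundErr_add_roundErr_le hp0 htl htl_le
    (add_mem_Fp_or_abs_le_abs_add hp0 hse hte hle)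

theorem accurate_relerr_bound_sterbenz :
    ∃ C : ℝ, 0 ≤ C ∧
      ∀ (p : ℕ), 6 ≤ p → ∀ RN : ℝ → ℝ, IsRN p RN → SymRN RN →
        ∀ u ox oy : ℝ, u = (2 : ℝ) ^ (-(p : ℤ)) →
          1 ≤ ox → ox ≤ 1 / (8 * u) - 2 → 1 ≤ oy → oy ≤ 1 / (8 * u) - 2 →
          ∀ xh xl yh yl : ℝ, xh ∈ Fp p → xl ∈ Fp p → yh ∈ Fp p → yl ∈ Fp p →
            |xl| ≤ ox * u * |xh| → |yl| ≤ oy * u * |yh| →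
            xh * yh < 0 → max |xh| |yh| ≤ 2 * min |xh| |yh| →
            |(accurateAdd RN xh xl yh yl).1 + (accurateAdd RN xh xl yh yl).2 -
                (xh + xl + yh + yl)| ≤
              (4 * u ^ 2 + C * u ^ 3) * |xh + xl + yh + yl| := by
  refine ⟨0, le_rfl, ?_⟩
  intro p hp RN hRN _ u ox oy hu _ hox _ hoy xh xl yh yl hxh hxl hyh hyl hx hy hneg hmax
  obtain rfl : u = unitRoundoff p := hu
  have hu0 := unitRoundoff_pos (p := p)
  have hhigh := abs_add_le_min_of_mul_neg hneg hmax
  have hlow := abs_add_le_min_of_abs_le_third (hx.trans (mul_abs_le_third hu0 hox xh))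
    (hy.trans (mul_abs_le_third hu0 hoy yh)) hmax
  refine (accurate_relerr_bound_sterbenz_general (by omega) hRN hxh hxl hyh hyl hhigh hlow).trans ?_
  rw [zero_mul, add_zero]
  gcongr
  exact two_mul_sq_div_one_sub_le (unitRoundoff_le_half (by omega))
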